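/- arXiv:math/0512636 — 2 statements merged into one kernel-verified Lean document; each statement's English description precedes it below -/
import Mathlib

section
/- For every nonnegative function f : {0,1}^n → ℝ, f ≥ 0, which is not identically zero, one has E_x Σ_{i=1}^n (f(x) − f(x⊕e_i))² ≥ 2 · E[f²] · log( E[f²] / (E f)² ). -/
open Finset

/-- Expectation with respect to the uniform measure on the discrete cube `{0,1}^n`. -/
noncomputable def cubeE {n : ℕ} (f : (Fin n → Bool) → ℝ) : ℝ :=
  (∑ x : Fin n → Bool, f x) / 2 ^ n

/-- `x ⊕ e_i` : flip the `i`-th coordinate of `x`. -/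
def flipAt {n : ℕ} (x : Fin n → Bool) (i : Fin n) : Fin n → Bool :=
  Function.update x i (!x i)

/-- Influence of the `i`-th variable of a Boolean function,
`I_i(f) = Pr_x[f(x) ≠ f(x ⊕ e_i)]` under the uniform measure. -/
noncomputable def infl {n : ℕ} (f : (Fin n → Bool) → Bool) (i : Fin n) : ℝ :=
  cubeE (fun x => if f x ≠ f (flipAt x i) then 1 else 0)

/-- Expectation of a Boolean function under the uniform measure. -/
noncomputable def meanB {n : ℕ} (f : (Fin n → Bool) → Bool) : ℝ :=
  cubeE (fun x => if f x then 1 else 0)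

/-- Conditional expectation given the first `j` coordinates: `condE f j x` is the
average of `f` over all `y` agreeing with `x` in the first `j` coordinates. -/
noncomputable def condE {n : ℕ} (f : (Fin n → Bool) → ℝ) (j : ℕ) (x : Fin n → Bool) : ℝ :=
  (∑ y : Fin n → Bool, if ∀ k : Fin n, (k : ℕ) < j → y k = x k then f y else 0) / 2 ^ (n - j)

/-- The Dirichlet form `E(f,f) = E_x Σ_i (f(x) - f(x ⊕ e_i))²`. -/
noncomputable def energy {n : ℕ} (f : (Fin n → Bool) → ℝ) : ℝ :=
  cubeE (fun x => ∑ i : Fin n, (f x - f (flipAt x i)) ^ 2)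

/-- Entropy of a nonnegative function: `Ent(g) = E[g log g] - E g · log E g`
(the convention `0 log 0 = 0` holds since `Real.log 0 = 0`). -/
noncomputable def ent {n : ℕ} (g : (Fin n → Bool) → ℝ) : ℝ :=
  cubeE (fun x => g x * Real.log (g x)) - cubeE g * Real.log (cubeE g)

lemma aux_log {s t : ℝ} (hs : 0 < s) (hst : s ≤ t) :
    t * (Real.log (t ^ 2) - Real.log ((s ^ 2 + t ^ 2) / 2)) ≤ t - s := by
  have ht : 0 < t := hs.trans_le hst
  have hanti : Antitone (fun w : ℝ => Real.log (1 + w ^ 2) - w) := by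
    have hd : ∀ w : ℝ, HasDerivAt (fun w : ℝ => Real.log (1 + w ^ 2) - w)
        ((2 * w) / (1 + w ^ 2) - 1) w := by
      intro w
      have h1 : HasDerivAt (fun w : ℝ => 1 + w ^ 2) (2 * w) w := by
        simpa using (hasDerivAt_pow 2 w).const_add 1
      exact (h1.log (by positivity)).sub (hasDerivAt_id w)
    apply antitone_of_deriv_nonpos (fun w => (hd w).differentiableAt)
    intro w
    rw [(hd w).deriv, sub_nonpos, div_le_one (by positivity)]
    nlinarith [sq_nonneg (w - 1)]
  have h := hanti (show s / t ≤ 1 by rw [div_le_one ht]; exact hst)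
  have e : (s ^ 2 + t ^ 2) / 2 = t ^ 2 * ((1 + (s / t) ^ 2) / 2) := by
    field_simp
    ring
  have e2 : t - s = t * (1 - s / t) := by field_simp
  rw [e, e2, Real.log_mul (by positivity) (by positivity),
    Real.log_div (by positivity) (by norm_num)]
  apply mul_le_mul_of_nonneg_left _ ht.le
  norm_num at h
  linarith

lemma two_point_aux {s t : ℝ} (hs : 0 ≤ s) (hst : s ≤ t) :
    s ^ 2 * Real.log (s ^ 2) + t ^ 2 * Real.log (t ^ 2)
      - (s ^ 2 + t ^ 2) * Real.log ((s ^ 2 + t ^ 2) / 2) ≤ (s - t) ^ 2 := by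
  rcases hs.eq_or_lt with rfl | hs
  · rcases hst.eq_or_lt with rfl | ht
    · simp
    · have h2 : Real.log 2 ≤ 1 := by
        have := Real.log_le_sub_one_of_pos (show (0:ℝ) < 2 by norm_num)
        linarith
      have h3 : Real.log ((0 ^ 2 + t ^ 2) / 2) = Real.log (t ^ 2) - Real.log 2 := by
        rw [← Real.log_div (by positivity) (by norm_num)]; simp
      rw [h3]
      nlinarith [sq_nonneg t]
  · let G : ℝ → ℝ := fun t => (s - t) ^ 2 - (s ^ 2 * Real.log (s ^ 2) + t ^ 2 * Real.log (t ^ 2)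
      - (s ^ 2 + t ^ 2) * Real.log ((s ^ 2 + t ^ 2) / 2))
    have hd : ∀ t : ℝ, 0 < t → HasDerivAt G
        (2 * ((t - s) - t * (Real.log (t ^ 2) - Real.log ((s ^ 2 + t ^ 2) / 2)))) t := by
      intro t ht
      have h1 : HasDerivAt (fun t : ℝ => t ^ 2) (2 * t) t := by
        simpa using hasDerivAt_pow 2 t
      have h2 : HasDerivAt (fun t : ℝ => s ^ 2 + t ^ 2) (2 * t) t := h1.const_add _
      have h3 := h1.mul (h1.log (by positivity))
      have h4 := h2.mul ((h2.div_const 2).log (by positivity))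
      have h5 : HasDerivAt (fun t : ℝ => (s - t) ^ 2) (2 * (s - t) * (-1)) t := by
        have := ((hasDerivAt_id t).const_sub s).fun_pow 2
        simpa using this
      have h6 : HasDerivAt G _ t := h5.sub ((h3.const_add (s ^ 2 * Real.log (s ^ 2))).sub h4)
      refine h6.congr_deriv ?_
      field_simp
      ring
    have hm : MonotoneOn G (Set.Ici s) := by
      apply monotoneOn_of_deriv_nonneg (convex_Ici s)
      · intro x hx
        exact (hd x (hs.trans_le hx)).continuousAt.continuousWithinAt
      · intro x hx
        rw [interior_Ici] at hx
        exact (hd x (hs.trans hx)).differentiableAt.differentiableWithinAt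
      · intro x hx
        rw [interior_Ici] at hx
        have hx' : s < x := hx
        rw [(hd x (hs.trans hx)).deriv]
        have := aux_log hs hx'.le
        linarith
    have h := hm (Set.mem_Ici.2 le_rfl) (Set.mem_Ici.2 hst) hst
    have h0 : G s = 0 := by
      simp only [G]
      rw [show (s ^ 2 + s ^ 2) / 2 = s ^ 2 by ring]
      ring
    rw [h0] at h
    simp only [G] at h
    linarith

lemma two_point {p q : ℝ} (hp : 0 ≤ p) (hq : 0 ≤ q) :
    p * Real.log p + q * Real.log q - (p + q) * Real.log ((p + q) / 2)
      ≤ p + q - 2 * (√p * √q) := by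
  have hp2 := Real.sq_sqrt hp
  have hq2 := Real.sq_sqrt hq
  rcases le_total (√p) (√q) with h | h
  · have := two_point_aux (Real.sqrt_nonneg p) h
    rw [sub_sq, hp2, hq2] at this
    linarith
  · have := two_point_aux (Real.sqrt_nonneg q) h
    rw [sub_sq, hp2, hq2, add_comm q p] at this
    linarith

lemma cubeE_succ {n : ℕ} (f : (Fin (n + 1) → Bool) → ℝ) :
    cubeE f = (cubeE (fun x : Fin n → Bool => f (Fin.cons true x))
      + cubeE (fun x : Fin n → Bool => f (Fin.cons false x))) / 2 := by
  have h : ∑ x, f x = ∑ x : Fin n → Bool, f (Fin.cons true x)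
      + ∑ x : Fin n → Bool, f (Fin.cons false x) := by
    rw [← (Fin.consEquiv (fun _ : Fin (n + 1) => Bool)).sum_comp f, Fintype.sum_prod_type,
      Fintype.sum_bool]
    rfl
  unfold cubeE
  rw [h, pow_succ]
  field_simp

lemma cubeE_add {n : ℕ} (f g : (Fin n → Bool) → ℝ) :
    cubeE (fun x => f x + g x) = cubeE f + cubeE g := by
  simp [cubeE, Finset.sum_add_distrib, add_div]

lemma cubeE_sub {n : ℕ} (f g : (Fin n → Bool) → ℝ) :
    cubeE (fun x => f x - g x) = cubeE f - cubeE g := by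
  simp [cubeE, Finset.sum_sub_distrib, sub_div]

lemma cubeE_smul {n : ℕ} (c : ℝ) (f : (Fin n → Bool) → ℝ) :
    cubeE (fun x => c * f x) = c * cubeE f := by
  simp [cubeE, ← Finset.mul_sum, mul_div_assoc]

lemma cubeE_mono {n : ℕ} {f g : (Fin n → Bool) → ℝ} (h : ∀ x, f x ≤ g x) :
    cubeE f ≤ cubeE g := by
  unfold cubeE
  exact div_le_div_of_nonneg_right (Finset.sum_le_sum fun x _ => h x) (by positivity)

lemma cubeE_nonneg {n : ℕ} {f : (Fin n → Bool) → ℝ} (h : ∀ x, 0 ≤ f x) :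
    0 ≤ cubeE f := by
  unfold cubeE
  exact div_nonneg (Finset.sum_nonneg fun x _ => h x) (by positivity)

lemma cubeE_pos {n : ℕ} {f : (Fin n → Bool) → ℝ} (h : ∀ x, 0 ≤ f x) (h' : ∃ x, 0 < f x) :
    0 < cubeE f := by
  unfold cubeE
  obtain ⟨x, hx⟩ := h'
  exact div_pos (Finset.sum_pos' (fun x _ => h x) ⟨x, Finset.mem_univ _, hx⟩) (by positivity)

lemma cubeE_cs {n : ℕ} (f g : (Fin n → Bool) → ℝ) :
    cubeE (fun x => f x * g x)
      ≤ √(cubeE fun x => f x ^ 2) * √(cubeE fun x => g x ^ 2) := by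
  unfold cubeE
  rw [Real.sqrt_div' _ (by positivity), Real.sqrt_div' _ (by positivity), div_mul_div_comm,
    Real.mul_self_sqrt (by positivity)]
  exact div_le_div_of_nonneg_right (Real.sum_mul_le_sqrt_mul_sqrt _ f g) (by positivity)

lemma flipAt_cons_zero {n : ℕ} (b : Bool) (x : Fin n → Bool) :
    flipAt (Fin.cons b x : Fin (n + 1) → Bool) 0 = Fin.cons (!b) x := by
  simp [flipAt]

lemma flipAt_cons_succ {n : ℕ} (b : Bool) (x : Fin n → Bool) (i : Fin n) :
    flipAt (Fin.cons b x : Fin (n + 1) → Bool) i.succ = Fin.cons b (flipAt x i) := by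
  simp [flipAt, Fin.cons_update]

lemma energy_succ {n : ℕ} (f : (Fin (n + 1) → Bool) → ℝ) :
    energy f = (energy (fun x : Fin n → Bool => f (Fin.cons true x))
      + energy (fun x : Fin n → Bool => f (Fin.cons false x))) / 2
      + cubeE (fun x : Fin n → Bool => (f (Fin.cons true x) - f (Fin.cons false x)) ^ 2) := by
  unfold energy
  rw [cubeE_succ]
  simp only [Fin.sum_univ_succ, flipAt_cons_zero, flipAt_cons_succ, cubeE_add, Bool.not_true,
    Bool.not_false]
  have : cubeE (fun x : Fin n → Bool => (f (Fin.cons false x) - f (Fin.cons true x)) ^ 2)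
      = cubeE (fun x : Fin n → Bool => (f (Fin.cons true x) - f (Fin.cons false x)) ^ 2) := by
    congr 1; funext x; ring
  rw [this]
  ring

lemma log_sobolev {n : ℕ} (f : (Fin n → Bool) → ℝ) :
    2 * ent (fun x => f x ^ 2) ≤ energy f := by
  induction n with
  | zero => simp [ent, energy, cubeE]
  | succ n ih =>
    rw [energy_succ]
    have h1 := ih (fun x => f (Fin.cons true x))
    have h0 := ih (fun x => f (Fin.cons false x))
    set f1 : (Fin n → Bool) → ℝ := fun x => f (Fin.cons true x) with hf1
    set f0 : (Fin n → Bool) → ℝ := fun x => f (Fin.cons false x) with hf0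
    have htp := two_point (cubeE_nonneg (fun x => sq_nonneg (f1 x)))
      (cubeE_nonneg (fun x => sq_nonneg (f0 x)))
    have hcs := cubeE_cs f1 f0
    have hE : cubeE (fun x => (f1 x - f0 x) ^ 2)
        = cubeE (fun x => f1 x ^ 2) + cubeE (fun x => f0 x ^ 2)
          - 2 * cubeE (fun x => f1 x * f0 x) := by
      rw [← cubeE_add, ← cubeE_smul, ← cubeE_sub]
      congr 1; funext x; ring
    change _ ≤ _ + cubeE (fun x => (f1 x - f0 x) ^ 2)
    rw [hE]
    unfold ent at *
    rw [cubeE_succ, cubeE_succ (fun x => f x ^ 2)]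
    change 2 * ((cubeE (fun x => f1 x ^ 2 * Real.log (f1 x ^ 2))
      + cubeE (fun x => f0 x ^ 2 * Real.log (f0 x ^ 2))) / 2
      - (cubeE (fun x => f1 x ^ 2) + cubeE (fun x => f0 x ^ 2)) / 2
       * Real.log ((cubeE (fun x => f1 x ^ 2) + cubeE (fun x => f0 x ^ 2)) / 2)) ≤ _
    linarith

/-- **Functional edge-isoperimetric inequality**: for every nonnegative, not identically
zero `f : {0,1}^n → ℝ`, `E_x Σ_i (f(x) - f(x⊕e_i))² ≥ 2 E[f²] log(E[f²]/(E f)²)`. -/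
theorem functional_isoperimetric_inequality {n : ℕ} (f : (Fin n → Bool) → ℝ)
    (hf : ∀ x, 0 ≤ f x) (hne : ∃ x, f x ≠ 0) :
    energy f ≥ 2 * cubeE (fun x => f x ^ 2) *
      Real.log (cubeE (fun x => f x ^ 2) / (cubeE f) ^ 2) := by
  have hpos : 0 < cubeE f := by
    obtain ⟨x, hx⟩ := hne
    exact cubeE_pos hf ⟨x, lt_of_le_of_ne (hf x) (Ne.symm hx)⟩
  have hpos2 : 0 < cubeE (fun x => f x ^ 2) := by
    obtain ⟨x, hx⟩ := hne
    exact cubeE_pos (fun x => sq_nonneg _) ⟨x, by positivity⟩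
  have hls := log_sobolev f
  set q := cubeE (fun x => f x ^ 2) with hq
  set p := cubeE f with hp
  have hpt : ∀ x, f x ^ 2 * (2 * Real.log (q / p)) - f x ^ 2 * Real.log (f x ^ 2)
      ≤ 2 * ((q / p) * f x - f x ^ 2) := by
    intro x
    rcases (hf x).eq_or_lt with h | h
    · rw [← h]; simp
    · have hl := Real.log_le_sub_one_of_pos (show 0 < (q / p) / f x by positivity)
      rw [Real.log_div (by positivity) (by positivity)] at hl
      have h2 := mul_le_mul_of_nonneg_left hl (sq_nonneg (f x))
      have e : f x ^ 2 * (q / p / f x - 1) = (q / p) * f x - f x ^ 2 := by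
        field_simp
      rw [e] at h2
      rw [Real.log_pow]
      push_cast
      linarith
  have hm := cubeE_mono hpt
  have e1 : cubeE (fun x => f x ^ 2 * (2 * Real.log (q / p)))
      = 2 * Real.log (q / p) * q := by
    rw [hq, ← cubeE_smul]
    congr 1; funext x; ring
  rw [cubeE_sub, cubeE_smul, cubeE_sub, cubeE_smul, e1, ← hq, ← hp,
    div_mul_cancel₀ _ hpos.ne', sub_self, mul_zero] at hm
  unfold ent at hls
  rw [← hq] at hls
  rw [Real.log_div (by positivity) (by positivity)] at hm ⊢
  rw [Real.log_pow]
  push_cast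
  linarith
end

section
/- Let μ = ⊗_{k=1}^n μ_k be a product probability measure on {0,1}^n with μ_k(1) = p_k and μ_k(0) = 1 − p_k, and let f : {0,1}^n → ℝ. For 1 ≤ i ≤ n let f_i = E(f | F_i) be the conditional expectation of f given the first i coordinates (computed with respect to μ), and d_i = f_i − f_{i−1}. Then E_μ |d_i| ≤ 2 p_i (1 − p_i) · E_{x∼μ} | f(x) − f(x⊕e_i) |. -/
open Finset

/-- Weight of the point `x` under the product measure `μ = ⊗ μ_k`
with `μ_k(1) = p_k`, `μ_k(0) = 1 - p_k`. -/
noncomputable def prodWt {n : ℕ} (p : Fin n → ℝ) (x : Fin n → Bool) : ℝ :=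
  ∏ k : Fin n, if x k then p k else 1 - p k

/-- Expectation with respect to the product measure determined by `p`. -/
noncomputable def prodE {n : ℕ} (p : Fin n → ℝ) (f : (Fin n → Bool) → ℝ) : ℝ :=
  ∑ x : Fin n → Bool, prodWt p x * f x

/-- Conditional expectation `E(f | F_j)` given the first `j` coordinates, with respect to
the product measure determined by `p`: the `μ`-average of `f` over the points `y` agreeing
with `x` in the first `j` coordinates. -/
noncomputable def prodCondE {n : ℕ} (p : Fin n → ℝ) (f : (Fin n → Bool) → ℝ) (j : ℕ)
    (x : Fin n → Bool) : ℝ :=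
  ∑ y : Fin n → Bool,
    if ∀ k : Fin n, (k : ℕ) < j → y k = x k then
      (∏ k ∈ Finset.univ.filter fun k : Fin n => j ≤ (k : ℕ),
        if y k then p k else 1 - p k) * f y
    else 0

theorem aux_flip_flip {n : ℕ} (x : Fin n → Bool) (i : Fin n) : flipAt (flipAt x i) i = x := by
  unfold flipAt; simp

theorem aux_flip_sum {n : ℕ} (i : Fin n) (F : (Fin n → Bool) → ℝ) :
    ∑ x, F (flipAt x i) = ∑ x, F x :=
  Equiv.sum_comp (Function.Involutive.toPerm (fun x : Fin n → Bool => flipAt x i)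
    (fun x => aux_flip_flip x i)) F

theorem aux_flip_ne {n : ℕ} (x : Fin n → Bool) (i k : Fin n) (h : k ≠ i) :
    flipAt x i k = x k := by
  unfold flipAt; simp [h]

theorem aux_flip_self {n : ℕ} (x : Fin n → Bool) (i : Fin n) :
    flipAt x i i = !x i := by
  unfold flipAt; simp

/-- One step of the tower property. -/
theorem aux_tower {n : ℕ} (p : Fin n → ℝ) (f : (Fin n → Bool) → ℝ) (i : Fin n)
    (x : Fin n → Bool) :
    prodCondE p f (i : ℕ) x = ∑ b : Bool, (if b then p i else 1 - p i) *
      prodCondE p f ((i : ℕ) + 1) (Function.update x i b) := by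
  unfold prodCondE
  simp_rw [Finset.mul_sum]
  rw [Finset.sum_comm]
  refine Finset.sum_congr rfl fun y _ => ?_
  have hW : (∏ k ∈ Finset.univ.filter fun k : Fin n => (i : ℕ) ≤ (k : ℕ),
        if y k then p k else 1 - p k) = (if y i then p i else 1 - p i) *
      ∏ k ∈ Finset.univ.filter fun k : Fin n => (i : ℕ) + 1 ≤ (k : ℕ),
        if y k then p k else 1 - p k := by
    have : (Finset.univ.filter fun k : Fin n => (i : ℕ) ≤ (k : ℕ)) =
        insert i (Finset.univ.filter fun k : Fin n => (i : ℕ) + 1 ≤ (k : ℕ)) := by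
      ext k
      simp only [Finset.mem_filter, Finset.mem_univ, true_and, Finset.mem_insert, Fin.ext_iff]
      omega
    rw [this, Finset.prod_insert (by simp)]
  have hc : ∀ b : Bool, (∀ k : Fin n, (k : ℕ) < (i : ℕ) + 1 → y k = Function.update x i b k) ↔
      ((∀ k : Fin n, (k : ℕ) < (i : ℕ) → y k = x k) ∧ y i = b) := by
    intro b
    constructor
    · intro h
      refine ⟨fun k hk => ?_, ?_⟩
      · have := h k (by omega)
        rwa [Function.update_of_ne (by rintro rfl; omega)] at this
      · have := h i (by omega)
        simpa using this
    · rintro ⟨h, hb⟩ k hk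
      by_cases hki : k = i
      · subst hki; simpa using hb
      · rw [Function.update_of_ne hki]
        refine h k ?_
        have : (k : ℕ) ≠ i := fun h => hki (Fin.ext h)
        omega
  simp_rw [hc]
  rw [hW]
  generalize (∏ k ∈ Finset.univ.filter fun k : Fin n => (i : ℕ) + 1 ≤ (k : ℕ),
        if y k then p k else 1 - p k) = W
  by_cases h : ∀ k : Fin n, (k : ℕ) < (i : ℕ) → y k = x k
  · simp only [h, Fintype.sum_bool]
    cases hy : y i <;> simp <;> ring
  · simp only [h, Fintype.sum_bool]
    simp

theorem aux_condE_flip {n : ℕ} (p : Fin n → ℝ) (f : (Fin n → Bool) → ℝ) (i : Fin n)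
    (x : Fin n → Bool) :
    prodCondE p f ((i : ℕ) + 1) (flipAt x i) =
      prodCondE p (fun y => f (flipAt y i)) ((i : ℕ) + 1) x := by
  unfold prodCondE
  rw [← aux_flip_sum i]
  refine Finset.sum_congr rfl fun y _ => ?_
  have hc : (∀ k : Fin n, (k : ℕ) < (i : ℕ) + 1 → flipAt y i k = flipAt x i k) ↔
      (∀ k : Fin n, (k : ℕ) < (i : ℕ) + 1 → y k = x k) := by
    refine forall_congr' fun k => imp_congr_right fun _ => ?_
    by_cases hki : k = i
    · subst hki; simp [aux_flip_self]
    · rw [aux_flip_ne _ _ _ hki, aux_flip_ne _ _ _ hki]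
  have hW : (∏ k ∈ Finset.univ.filter fun k : Fin n => (i : ℕ) + 1 ≤ (k : ℕ),
        if flipAt y i k then p k else 1 - p k) =
      ∏ k ∈ Finset.univ.filter fun k : Fin n => (i : ℕ) + 1 ≤ (k : ℕ),
        if y k then p k else 1 - p k := by
    refine Finset.prod_congr rfl fun k hk => ?_
    rw [aux_flip_ne]
    rintro rfl
    simp at hk
  simp only [hc, hW]

theorem aux_wt_nonneg {n : ℕ} (p : Fin n → ℝ) (hp : ∀ k, 0 ≤ p k ∧ p k ≤ 1) (k : Fin n)
    (b : Bool) : 0 ≤ (if b then p k else 1 - p k) := by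
  have := hp k
  split_ifs <;> linarith

theorem aux_abs {n : ℕ} (p : Fin n → ℝ) (hp : ∀ k, 0 ≤ p k ∧ p k ≤ 1)
    (f g : (Fin n → Bool) → ℝ) (j : ℕ) (x : Fin n → Bool) :
    |prodCondE p f j x - prodCondE p g j x| ≤ prodCondE p (fun y => |f y - g y|) j x := by
  unfold prodCondE
  rw [← Finset.sum_sub_distrib]
  refine (Finset.abs_sum_le_sum_abs _ _).trans (Finset.sum_le_sum fun y _ => ?_)
  split_ifs
  · rw [← mul_sub, abs_mul, abs_of_nonneg]
    exact Finset.prod_nonneg fun k _ => aux_wt_nonneg p hp k (y k)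
  · simp

/-- `E[E(g | F_j)] = E[g]`. -/
theorem aux_total {n : ℕ} (p : Fin n → ℝ) (g : (Fin n → Bool) → ℝ) (j : ℕ) :
    prodE p (prodCondE p g j) = prodE p g := by
  unfold prodE prodCondE
  simp_rw [Finset.mul_sum]
  rw [Finset.sum_comm]
  refine Finset.sum_congr rfl fun y _ => ?_
  have key : ∑ x : Fin n → Bool, (if ∀ k : Fin n, (k : ℕ) < j → y k = x k then prodWt p x else 0)
      = ∏ k ∈ Finset.univ.filter (fun k : Fin n => ¬ j ≤ (k : ℕ)),
        (if y k then p k else 1 - p k) := by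
    have h1 : ∀ x : Fin n → Bool,
        (if ∀ k : Fin n, (k : ℕ) < j → y k = x k then prodWt p x else 0) =
        ∏ k : Fin n, (if (k : ℕ) < j → y k = x k then (if x k then p k else 1 - p k) else 0) := by
      intro x
      split_ifs with h
      · unfold prodWt
        exact Finset.prod_congr rfl fun k _ => by rw [if_pos (h k)]
      · push Not at h
        obtain ⟨k, hk, hne⟩ := h
        symm
        exact Finset.prod_eq_zero (Finset.mem_univ k) (by simp [hk, hne])
    simp_rw [h1]
    rw [← Fintype.prod_sum (fun (k : Fin n) (b : Bool) =>
      if (k : ℕ) < j → y k = b then (if b then p k else 1 - p k) else 0), Finset.prod_filter]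
    refine Finset.prod_congr rfl fun k _ => ?_
    by_cases hk : (k : ℕ) < j
    · cases hy : y k <;> simp [hk]
    · simp [hk]
  have h2 : prodWt p y = (∏ k ∈ Finset.univ.filter (fun k : Fin n => j ≤ (k : ℕ)),
        (if y k then p k else 1 - p k)) *
      ∏ k ∈ Finset.univ.filter (fun k : Fin n => ¬ j ≤ (k : ℕ)),
        (if y k then p k else 1 - p k) := by
    rw [Finset.prod_filter_mul_prod_filter_not]; rfl
  rw [h2, ← key, Finset.mul_sum, Finset.sum_mul]
  refine Finset.sum_congr rfl fun x _ => ?_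
  split_ifs
  · ring
  · ring

theorem aux_pair {n : ℕ} (p : Fin n → ℝ) (H : (Fin n → Bool) → ℝ) (i : Fin n)
    (hH : ∀ x, H (flipAt x i) = H x) :
    prodE p (fun x => (if x i then 1 - p i else p i) * H x) =
      2 * p i * (1 - p i) * prodE p H := by
  have hw : ∀ x, prodWt p x = (if x i then p i else 1 - p i) *
      ∏ k ∈ Finset.univ.erase i, (if x k then p k else 1 - p k) := by
    intro x
    unfold prodWt
    rw [Finset.mul_prod_erase _ (fun k => if x k then p k else 1 - p k) (Finset.mem_univ i)]
  have hR : ∀ x : Fin n → Bool,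
      (∏ k ∈ Finset.univ.erase i, (if flipAt x i k then p k else 1 - p k)) =
      ∏ k ∈ Finset.univ.erase i, (if x k then p k else 1 - p k) := by
    intro x
    refine Finset.prod_congr rfl fun k hk => ?_
    rw [aux_flip_ne _ _ _ (Finset.ne_of_mem_erase hk)]
  have h2 : 2 * prodE p H = ∑ x : Fin n → Bool,
      (∏ k ∈ Finset.univ.erase i, (if x k then p k else 1 - p k)) * H x := by
    rw [two_mul]
    unfold prodE
    nth_rewrite 1 [← aux_flip_sum i]
    rw [← Finset.sum_add_distrib]
    refine Finset.sum_congr rfl fun x _ => ?_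
    rw [hw, hw x, hR, hH, aux_flip_self]
    cases x i <;> simp <;> ring
  rw [show 2 * p i * (1 - p i) * prodE p H = p i * (1 - p i) * (2 * prodE p H) by ring, h2,
    Finset.mul_sum]
  unfold prodE
  refine Finset.sum_congr rfl fun x _ => ?_
  rw [hw]
  generalize (∏ k ∈ Finset.univ.erase i, (if x k then p k else 1 - p k)) = R
  cases hx : x i <;> simp [hx] <;> ring

theorem aux_diff {n : ℕ} (p : Fin n → ℝ) (f : (Fin n → Bool) → ℝ) (i : Fin n)
    (x : Fin n → Bool) :
    prodCondE p f ((i : ℕ) + 1) x - prodCondE p f (i : ℕ) x =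
      (if x i then 1 - p i else p i) * (prodCondE p f ((i : ℕ) + 1) x -
        prodCondE p f ((i : ℕ) + 1) (flipAt x i)) := by
  rw [aux_tower]
  have h : Function.update x i (x i) = x := Function.update_eq_self i x
  unfold flipAt
  cases hx : x i <;> rw [hx] at h <;> simp [h] <;> ring

/-- For a product measure `μ` on `{0,1}^n`, the martingale differences
`d_i = E(f|F_i) - E(f|F_{i-1})` satisfy
`E_μ |d_i| ≤ 2 p_i (1-p_i) · E_{x∼μ} |f(x) - f(x⊕e_i)|`. -/
theorem abs_martingale_difference_le {n : ℕ} (p : Fin n → ℝ)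
    (hp : ∀ k, 0 ≤ p k ∧ p k ≤ 1) (f : (Fin n → Bool) → ℝ) (i : Fin n) :
    prodE p (fun x => |prodCondE p f ((i : ℕ) + 1) x - prodCondE p f (i : ℕ) x|) ≤
      2 * p i * (1 - p i) * prodE p (fun x => |f x - f (flipAt x i)|) := by
  have hnn : ∀ x, 0 ≤ prodWt p x := fun x =>
    Finset.prod_nonneg fun k _ => aux_wt_nonneg p hp k (x k)
  set g : (Fin n → Bool) → ℝ := fun x => |f x - f (flipAt x i)| with hg
  have hgf : ∀ x, g (flipAt x i) = g x := fun x => by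
    simp only [hg]; rw [aux_flip_flip, abs_sub_comm]
  have hH : ∀ x, prodCondE p g ((i : ℕ) + 1) (flipAt x i) = prodCondE p g ((i : ℕ) + 1) x := by
    intro x
    rw [aux_condE_flip]
    simp_rw [hgf]
  rw [← aux_total p g ((i : ℕ) + 1), ← aux_pair p _ i hH]
  unfold prodE
  refine Finset.sum_le_sum fun x _ => mul_le_mul_of_nonneg_left ?_ (hnn x)
  have h0 : 0 ≤ (if x i then 1 - p i else p i) := by
    have := hp i
    split_ifs <;> linarith
  beta_reduce
  rw [aux_diff, abs_mul, abs_of_nonneg h0, aux_condE_flip]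
  exact mul_le_mul_of_nonneg_left (aux_abs p hp _ _ _ x) h0
end
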